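/- arXiv:1705.04471 — 2 statements merged into one kernel-verified Lean document; each statement's English description precedes it below -/
import Mathlib

section
/- Let n = p₁⋯p_r ∈ A be square-free monic with distinct monic irreducible factors p_i, and let ζ_i ∈ L be a fixed root of p_i. Then for all nonnegative integers m₁, …, m_r, the sum ∑_{a ∈ A, deg a < deg n} ∏_{i=1}^r a(ζ_i)^{m_i} (computed in L, with the convention 0⁰ = 1) equals (−1)^r if for every i the exponent m_i is a positive multiple of |p_i| − 1, and equals 0 otherwise. -/
open Polynomial

noncomputable section

/-- The polynomial of degree `< d` with coefficient vector `c : Fin d → F`.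
As `c` ranges over all of `Fin d → F`, this ranges exactly over the polynomials
of degree `< d` (each exactly once). -/
def toPoly {F : Type} [Field F] {d : ℕ} (c : Fin d → F) : Polynomial F :=
  ∑ i : Fin d, Polynomial.C (c i) * Polynomial.X ^ (i : ℕ)

/-!
By the Chinese remainder theorem the polynomials of degree `< deg n` are in bijection with
`∏ i, F[X] / (p i)`, and `a(ζ_i)` depends only on `a` modulo `p i`. The sum therefore factors as a
product of power sums `∑ x, x ^ m_i` over the finite fields `F[X] / (p i)`, each of which is `-1`
or `0`.
-/

open scoped Function

section PowerSums

theorem sum_eq_apply_zero_add_sum_units {G M : Type*} [GroupWithZero G] [Fintype G] [Fintype Gˣ]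
    [AddCommMonoid M] (f : G → M) : ∑ x, f x = f 0 + ∑ u : Gˣ, f u := by
  classical
  rw [Fintype.sum_eq_add_sum_subtype_ne f 0]
  exact congrArg _ (unitsEquivNeZero.sum_comp fun x : {x : G // x ≠ 0} => f x).symm

theorem sum_pow_eq_ite {K : Type*} [Field K] [Fintype K] (m : ℕ) :
    ∑ x : K, x ^ m = if 0 < m ∧ Fintype.card K - 1 ∣ m then -1 else 0 := by
  classical
  rcases m.eq_zero_or_pos with rfl | hm
  · simp
  · simp only [sum_eq_apply_zero_add_sum_units, zero_pow hm.ne', zero_add,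
      FiniteField.sum_pow_units, hm, true_and]

theorem sum_map_pow_eq_ite {K R : Type*} [Field K] [Fintype K] [Ring R] (φ : K →+* R) (m : ℕ) :
    ∑ x, φ x ^ m = if 0 < m ∧ Fintype.card K - 1 ∣ m then -1 else 0 := by
  simpa only [map_sum, map_pow, apply_ite φ, map_neg, map_one, map_zero]
    using congrArg φ (sum_pow_eq_ite m)

theorem sum_pi_prod_map_pow_eq_ite {ι R : Type*} {K : ι → Type*} [Fintype ι] [DecidableEq ι]
    [∀ i, Field (K i)] [∀ i, Fintype (K i)] [CommRing R] (φ : ∀ i, K i →+* R) (m : ι → ℕ) :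
    ∑ x : ∀ i, K i, ∏ i, φ i (x i) ^ m i =
      if ∀ i, 0 < m i ∧ Fintype.card (K i) - 1 ∣ m i then (-1) ^ Fintype.card ι else 0 := by
  rw [← Fintype.prod_sum fun i (x : K i) => φ i x ^ m i]
  simp only [sum_map_pow_eq_ite, Fintype.prod_ite_zero, Finset.prod_const, Finset.card_univ]

end PowerSums

section AdjoinRoot

variable {F : Type*} [Field F]

theorem finrank_adjoinRoot (f : F[X]) : Module.finrank F (AdjoinRoot f) = f.natDegree :=
  finrank_quotient_span_eq_natDegree

theorem moduleFinite_adjoinRoot {f : F[X]} (hf : f ≠ 0) : Module.Finite F (AdjoinRoot f) :=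
  (AdjoinRoot.powerBasis hf).finite

theorem card_adjoinRoot [Fintype F] {f : F[X]} (hf : f ≠ 0) [Fintype (AdjoinRoot f)] :
    Fintype.card (AdjoinRoot f) = Fintype.card F ^ f.natDegree := by
  have := moduleFinite_adjoinRoot hf
  rw [Module.card_eq_pow_finrank (K := F), finrank_adjoinRoot]

end AdjoinRoot

section Residues

variable {F ι : Type*}

/-- The reduction map of the Chinese remainder theorem, sending a polynomial of degree `< d` to
the family of its residues modulo the `p i`. -/
def degreeLTResidues [CommRing F] (p : ι → F[X]) (d : ℕ) :
    degreeLT F d →ₗ[F] ∀ i, AdjoinRoot (p i) :=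
  LinearMap.pi fun i => (AdjoinRoot.mkₐ (p i)).toLinearMap ∘ₗ (degreeLT F d).subtype

variable [Field F] [Fintype ι] {p : ι → F[X]}

theorem degreeLTResidues_injective (hp : ∀ i, p i ≠ 0) (hcop : Pairwise (IsCoprime on p)) :
    Function.Injective (degreeLTResidues p (∏ i, p i).natDegree) := by
  refine (injective_iff_map_eq_zero _).mpr fun a ha => Subtype.ext ?_
  have hdvd : ∏ i, p i ∣ (a : F[X]) :=
    Fintype.prod_dvd_of_coprime hcop fun i => AdjoinRoot.mk_eq_zero.mp (congrFun ha i)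
  refine eq_zero_of_dvd_of_degree_lt hdvd ?_
  rw [degree_eq_natDegree (Finset.prod_ne_zero_iff.mpr fun i _ => hp i)]
  exact mem_degreeLT.mp a.2

theorem degreeLTResidues_bijective (hp : ∀ i, p i ≠ 0) (hcop : Pairwise (IsCoprime on p)) :
    Function.Bijective (degreeLTResidues p (∏ i, p i).natDegree) := by
  have (i : ι) : Module.Finite F (AdjoinRoot (p i)) := moduleFinite_adjoinRoot (hp i)
  have hfinite : Module.Finite F (degreeLT F (∏ i, p i).natDegree) :=
    Module.Finite.equiv (degreeLTEquiv F _).symm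
  have hfinrank : Module.finrank F (degreeLT F (∏ i, p i).natDegree) =
      Module.finrank F (∀ i, AdjoinRoot (p i)) := by
    rw [(degreeLTEquiv F _).finrank_eq, Module.finrank_fin_fun, Module.finrank_pi_fintype,
      natDegree_prod _ _ fun i _ => hp i]
    simp only [finrank_adjoinRoot]
  have hinj := degreeLTResidues_injective hp hcop
  exact ⟨hinj, (LinearMap.injective_iff_surjective_of_finrank_eq_finrank hfinrank).mp hinj⟩

end Residues

theorem toPoly_eq_degreeLTEquiv_symm {F : Type} [Field F] {d : ℕ} (c : Fin d → F) :
    toPoly c = ((degreeLTEquiv F d).symm c : F[X]) := by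
  simp only [toPoly, C_mul_X_pow_eq_monomial]
  rfl

theorem toPoly_residues_bijective {F : Type} {ι : Type*} [Field F] [Fintype ι] {p : ι → F[X]}
    (hp : ∀ i, p i ≠ 0) (hcop : Pairwise (IsCoprime on p)) :
    Function.Bijective fun (c : Fin (∏ i, p i).natDegree → F) i =>
      AdjoinRoot.mk (p i) (toPoly c) := by
  simp only [toPoly_eq_degreeLTEquiv_symm]
  exact (degreeLTResidues_bijective hp hcop).comp (degreeLTEquiv F _).symm.bijective

theorem isCoprime_of_monic_of_irreducible_of_ne {F : Type*} [Field F] {f g : F[X]}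
    (hf : f.Monic ∧ Irreducible f) (hg : g.Monic ∧ Irreducible g) (hne : f ≠ g) :
    IsCoprime f g :=
  hf.2.coprime_iff_not_dvd.mpr fun hdvd =>
    hne (eq_of_monic_of_associated hf.1 hg.1 (hf.2.associated_of_dvd hg.2 hdvd))

theorem stmt5_general {F : Type} [Field F] [Fintype F] {L : Type*} [CommRing L] [Algebra F L]
    {ι : Type*} [Fintype ι] (p : ι → F[X]) (ζ : ι → L) (hp : ∀ i, Irreducible (p i))
    (hcop : Pairwise (IsCoprime on p)) (hζ : ∀ i, aeval (ζ i) (p i) = 0) (m : ι → ℕ) :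
    ∑ c : Fin (∏ i, p i).natDegree → F, ∏ i, aeval (ζ i) (toPoly c) ^ m i
      = if ∀ i, 0 < m i ∧ (Fintype.card F ^ (p i).natDegree - 1) ∣ m i
        then (-1 : L) ^ Fintype.card ι else 0 := by
  classical
  have hp_ne (i : ι) : p i ≠ 0 := (hp i).ne_zero
  have (i : ι) : Fact (Irreducible (p i)) := ⟨hp i⟩
  have (i : ι) : Module.Finite F (AdjoinRoot (p i)) := moduleFinite_adjoinRoot (hp_ne i)
  have (i : ι) : Finite (AdjoinRoot (p i)) := Module.finite_of_finite F
  let (i : ι) : Fintype (AdjoinRoot (p i)) := Fintype.ofFinite _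
  let φ (i : ι) : AdjoinRoot (p i) →+* L := AdjoinRoot.lift (algebraMap F L) (ζ i) (hζ i)
  have hφ (i : ι) (a : F[X]) : φ i (AdjoinRoot.mk (p i) a) = aeval (ζ i) a :=
    AdjoinRoot.lift_mk (hζ i) a
  calc
    _ = ∑ x : ∀ i, AdjoinRoot (p i), ∏ i, φ i (x i) ^ m i :=
      Fintype.sum_bijective _ (toPoly_residues_bijective hp_ne hcop) _ _ fun _ => by
        simp only [hφ]
    _ = _ := by
      simp only [sum_pi_prod_map_pow_eq_ite, card_adjoinRoot (hp_ne _)]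

/-- For square-free monic `n = p₁⋯p_r` with roots `ζ_i` of the `p_i`, the sum
`∑_{deg a < deg n} ∏_i a(ζ_i)^{m_i}` equals `(−1)^r` if every `m_i` is a positive
multiple of `|p_i| − 1`, and `0` otherwise. -/
theorem stmt5 {F : Type} [Field F] [Fintype F] {L : Type} [Field L] [Algebra F L]
    {r : ℕ} (p : Fin r → Polynomial F) (ζ : Fin r → L)
    (hp : ∀ i, (p i).Monic ∧ Irreducible (p i))
    (hdist : ∀ i i', i ≠ i' → p i ≠ p i')
    (hζ : ∀ i, Polynomial.aeval (ζ i) (p i) = 0)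
    (n : Polynomial F) (hn : n = ∏ i, p i)
    (m : Fin r → ℕ) :
    ∑ c : Fin n.natDegree → F, ∏ i, Polynomial.aeval (ζ i) (toPoly c) ^ m i
      = if ∀ i, 0 < m i ∧ (Fintype.card F ^ (p i).natDegree - 1) ∣ m i
        then (-1 : L) ^ r else 0 := by
  subst hn
  simpa only [Fintype.card_fin] using stmt5_general p ζ (fun i => (hp i).2)
    (fun i j hij => isCoprime_of_monic_of_irreducible_of_ne (hp i) (hp j) (hdist i j hij)) hζ m
end
end

section
/- Let n = p₁⋯p_r ∈ A be square-free monic and nonconstant with distinct monic irreducible factors p_i, let χ be a primitive Dirichlet character modulo n with values in L and sign s_χ, and let e : A → L be any 𝔽_q-linear map. Then for every nonnegative integer k such that either k = 0 or k + s_χ ≢ 0 (mod q − 1), one has ∑_{β ∈ A, deg β < deg n} χ(β)·e(β)^k = 0 in L (with the convention 0⁰ = 1). -/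
open Polynomial

noncomputable section

/-!
For `k = 0`, the polynomials of degree `< deg n` represent the classes of `A / n`, so the Chinese
remainder theorem factors the sum as `∏ i, ∑ x ∈ A / p i, χ_i x ^ e i`, and a power sum of
exponent less than `|K| - 1` over a finite field `K` vanishes. Otherwise the summand is homogeneous
of degree `k + ∑ e i` under scaling `β ↦ a β` with `a ∈ 𝔽_q^×`, so the sum is multiplied by
`a ^ (k + ∑ e i)`, which differs from `1` for some `a`.
-/

open scoped Function

section Homogeneous

variable {F : Type*} [Field F] [Fintype F]

theorem sum_eq_zero_of_map_units_smul {V M : Type*} [Fintype V] [MulAction Fˣ V]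
    [AddCommGroup M] [Module F M] {d : ℕ} (hd : ¬ Fintype.card F - 1 ∣ d) (f : V → M)
    (hf : ∀ (a : Fˣ) (v : V), f (a • v) = (a : F) ^ d • f v) :
    ∑ v, f v = 0 := by
  obtain ⟨a, ha⟩ : ∃ a : Fˣ, a ^ d ≠ 1 := by
    simpa only [not_forall] using (FiniteField.forall_pow_eq_one_iff F d).not.mpr hd
  have hinv : (a : F) ^ d • ∑ v, f v = ∑ v, f v := by
    simp only [Finset.smul_sum, ← hf]
    exact (MulAction.bijective a).sum_comp f
  have hcancel : ((a : F) ^ d - 1) • ∑ v, f v = 0 := by rw [sub_smul, hinv, one_smul, sub_self]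
  exact (smul_eq_zero.mp hcancel).resolve_left (sub_ne_zero.mpr fun h ↦ ha (Units.ext h))

end Homogeneous

section AdjoinRoot

variable {F : Type*} [Field F] {p : F[X]}

theorem finite_adjoinRoot [Finite F] (hp : p ≠ 0) : Finite (AdjoinRoot p) :=
  have := (AdjoinRoot.powerBasis hp).finite
  Module.finite_of_finite F

theorem sum_adjoinRoot_pow_eq_zero [Fintype F] (hp : Irreducible p) [Fintype (AdjoinRoot p)]
    {e : ℕ} (he : e < Fintype.card F ^ p.natDegree - 1) :
    ∑ x : AdjoinRoot p, x ^ e = 0 := by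
  have : Fact (Irreducible p) := ⟨hp⟩
  have hcard : Fintype.card (AdjoinRoot p) = Fintype.card F ^ p.natDegree := by
    rw [Module.card_eq_pow_finrank (K := F)]
    exact congrArg _ finrank_quotient_span_eq_natDegree
  exact FiniteField.sum_pow_lt_card_sub_one _ e (hcard ▸ he)

end AdjoinRoot

section ToPoly

variable {F : Type} [Field F]

theorem toPoly_smul {d : ℕ} (a : F) (c : Fin d → F) : toPoly (a • c) = a • toPoly c := by
  simp only [toPoly, Finset.smul_sum, Pi.smul_apply, smul_eq_mul, C_mul, smul_eq_C_mul, mul_assoc]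

theorem bijective_mk_toPoly {n : F[X]} (hn : n ≠ 0) :
    Function.Bijective fun c : Fin n.natDegree → F ↦ AdjoinRoot.mk n (toPoly c) := by
  let B : Module.Basis (Fin n.natDegree) F (AdjoinRoot n) := (AdjoinRoot.powerBasis hn).basis
  have hB (i : Fin n.natDegree) : B i = AdjoinRoot.root n ^ (i : ℕ) :=
    (AdjoinRoot.powerBasis hn).basis_eq_pow i
  have hmk (c : Fin n.natDegree → F) : AdjoinRoot.mk n (toPoly c) = B.equivFun.symm c := by
    simp [Module.Basis.equivFun_symm_apply, hB, toPoly, Algebra.smul_def]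
  simpa only [hmk] using B.equivFun.symm.bijective

variable {ι : Type*} [Fintype ι] {p : ι → F[X]}

theorem bijective_pi_mk_toPoly (hp : ∀ i, p i ≠ 0) (hcop : Pairwise (IsCoprime on p)) :
    Function.Bijective fun (c : Fin (∏ i, p i).natDegree → F) i ↦
      AdjoinRoot.mk (p i) (toPoly c) := by
  have hspan : Ideal.span {∏ i, p i} = ⨅ i, Ideal.span {p i} :=
    (Ideal.iInf_span_singleton fun _ _ h ↦ hcop h).symm
  have hspan_cop : Pairwise (IsCoprime on fun i ↦ Ideal.span {p i}) := fun _ _ h ↦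
    (Ideal.isCoprime_span_singleton_iff _ _).mpr (hcop h)
  let crt := (Ideal.quotEquivOfEq hspan).trans (Ideal.quotientInfRingEquivPiQuotient _ hspan_cop)
  exact crt.bijective.comp (bijective_mk_toPoly (Finset.prod_ne_zero_iff.mpr fun i _ ↦ hp i))

theorem sum_prod_mk_toPoly [Fintype F] [∀ i, Fintype (AdjoinRoot (p i))] (hp : ∀ i, p i ≠ 0)
    (hcop : Pairwise (IsCoprime on p)) {R : Type*} [CommSemiring R]
    (f : ∀ i, AdjoinRoot (p i) → R) :
    ∑ c : Fin (∏ i, p i).natDegree → F, ∏ i, f i (AdjoinRoot.mk (p i) (toPoly c)) =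
      ∏ i, ∑ x, f i x := by
  classical
  rw [Fintype.prod_sum]
  exact (bijective_pi_mk_toPoly hp hcop).sum_comp fun x ↦ ∏ i, f i (x i)

variable [Fintype F] {L : Type*} [CommRing L] [Algebra F L]

theorem sum_prod_aeval_toPoly_pow_eq_zero (hp : ∀ i, p i ≠ 0) (hcop : Pairwise (IsCoprime on p))
    {ζ : ι → L} (hζ : ∀ i, aeval (ζ i) (p i) = 0) {e : ι → ℕ} {j : ι} (hj : Irreducible (p j))
    (hej : e j < Fintype.card F ^ (p j).natDegree - 1) :
    ∑ c : Fin (∏ i, p i).natDegree → F, ∏ i, aeval (ζ i) (toPoly c) ^ e i = 0 := by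
  have (i : ι) : Finite (AdjoinRoot (p i)) := finite_adjoinRoot (hp i)
  have (i : ι) : Fintype (AdjoinRoot (p i)) := Fintype.ofFinite _
  let χ (i : ι) : AdjoinRoot (p i) →ₐ[F] L :=
    AdjoinRoot.liftAlgHom (p i) (Algebra.ofId F L) (ζ i) (hζ i)
  calc ∑ c : Fin (∏ i, p i).natDegree → F, ∏ i, aeval (ζ i) (toPoly c) ^ e i
      = ∏ i, ∑ x, χ i x ^ e i := sum_prod_mk_toPoly hp hcop fun i x ↦ χ i x ^ e i
    _ = ∏ i, χ i (∑ x, x ^ e i) := by simp only [map_sum, map_pow]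
    _ = 0 := Finset.prod_eq_zero (Finset.mem_univ j) <| by
      rw [sum_adjoinRoot_pow_eq_zero hj hej, map_zero]

theorem sum_prod_aeval_toPoly_pow_mul_pow_eq_zero {d : ℕ} (ζ : ι → L) (e : ι → ℕ)
    (ℓ : F[X] →ₗ[F] L) {k : ℕ} (hk : ¬ Fintype.card F - 1 ∣ k + ∑ i, e i) :
    ∑ c : Fin d → F, (∏ i, aeval (ζ i) (toPoly c) ^ e i) * ℓ (toPoly c) ^ k = 0 := by
  refine sum_eq_zero_of_map_units_smul hk _ fun a c ↦ ?_
  simp only [Units.smul_def, toPoly_smul, map_smul, _root_.smul_pow, Finset.prod_smul,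
    Finset.prod_pow_eq_pow_sum, smul_mul_smul_comm, ← pow_add, add_comm k]

end ToPoly

theorem pairwise_isCoprime_of_monic_of_irreducible {F ι : Type*} [Field F] {p : ι → F[X]}
    (hmonic : ∀ i, (p i).Monic) (hirr : ∀ i, Irreducible (p i)) (hinj : Function.Injective p) :
    Pairwise (IsCoprime on p) := fun i j hij ↦
  (hirr i).coprime_iff_not_dvd.mpr fun hdvd ↦ hij <| hinj <|
    eq_of_monic_of_associated (hmonic i) (hmonic j) ((hirr i).associated_of_dvd (hirr j) hdvd)

theorem stmt9_general {F : Type} [Field F] [Fintype F] {L : Type*} [CommRing L] [Algebra F L]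
    {ι : Type*} [Fintype ι] {p : ι → F[X]} (hp : ∀ i, p i ≠ 0)
    (hcop : Pairwise (IsCoprime on p)) {ζ : ι → L} (hζ : ∀ i, aeval (ζ i) (p i) = 0)
    {n : F[X]} (hn : n = ∏ i, p i) {e : ι → ℕ} (ℓ : F[X] →ₗ[F] L) {k : ℕ}
    (hk : (k = 0 ∧ ∃ i, Irreducible (p i) ∧ e i < Fintype.card F ^ (p i).natDegree - 1) ∨
      ¬ Fintype.card F - 1 ∣ k + (∑ i, e i) % (Fintype.card F - 1)) :
    ∑ c : Fin n.natDegree → F,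
      (∏ i, aeval (ζ i) (toPoly c) ^ e i) * ℓ (toPoly c) ^ k = 0 := by
  rcases hk with ⟨rfl, i, hirr, hei⟩ | hk
  · subst hn
    simpa only [pow_zero, mul_one] using sum_prod_aeval_toPoly_pow_eq_zero hp hcop hζ hirr hei
  · rw [Nat.dvd_iff_mod_eq_zero, Nat.add_mod_mod, ← Nat.dvd_iff_mod_eq_zero] at hk
    exact sum_prod_aeval_toPoly_pow_mul_pow_eq_zero ζ e ℓ hk

/-- Vanishing of twisted power sums: for a primitive Dirichlet character
`χ = ∏ χ_{ζ_i}^{e_i}` of square-free nonconstant conductor `n = p₁⋯p_r`, sign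
`s_χ = (∑ e_i) mod (q−1)`, and any `𝔽_q`-linear map `e : A → L`, if `k = 0` or
`k + s_χ ≢ 0 (mod q−1)` then `∑_{deg β < deg n} χ(β)·e(β)^k = 0`. -/
theorem stmt9 {F : Type} [Field F] [Fintype F] {L : Type} [Field L] [Algebra F L]
    {r : ℕ} (hr : 0 < r) (p : Fin r → Polynomial F) (ζ : Fin r → L)
    (hp : ∀ i, (p i).Monic ∧ Irreducible (p i))
    (hdist : ∀ i i', i ≠ i' → p i ≠ p i')
    (hζ : ∀ i, Polynomial.aeval (ζ i) (p i) = 0)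
    (n : Polynomial F) (hn : n = ∏ i, p i)
    (e : Fin r → ℕ)
    (he : ∀ i, 1 ≤ e i ∧ e i < Fintype.card F ^ (p i).natDegree - 1)
    (ℓ : Polynomial F →ₗ[F] L)
    (k : ℕ)
    (hk : k = 0 ∨ ¬ (Fintype.card F - 1) ∣ (k + (∑ i, e i) % (Fintype.card F - 1))) :
    ∑ c : Fin n.natDegree → F,
        (∏ i, Polynomial.aeval (ζ i) (toPoly c) ^ e i) * (ℓ (toPoly c)) ^ k = 0 :=
  stmt9_general (fun i ↦ (hp i).2.ne_zero)
    (pairwise_isCoprime_of_monic_of_irreducible (fun i ↦ (hp i).1) (fun i ↦ (hp i).2)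
      fun i j ↦ not_imp_not.mp (hdist i j)) hζ hn ℓ
    (hk.imp_left fun h ↦ ⟨h, ⟨0, hr⟩, (hp _).2, (he _).2⟩)
end
end
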